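/- For all integers B ≥ 0, m ≥ 0 and every real μ with 0 < μ < 1, the mean of the generalized binomial distribution is Σ_{j=0}^{2B+2m} j·p_j(2B, μ, m) = m + 2Bμ. -/

import Mathlib

open Finset

/-- The Jacobi polynomial `P_m^{(α,β)}(x)` for integer parameters `α, β`
(with `m+α ≥ 0` and `m+β ≥ 0` in the intended range), defined by
`P_m^{(α,β)}(x) = ∑_{s=0}^{m} C(m+α, m−s) C(m+β, s) ((x−1)/2)^s ((x+1)/2)^{m−s}`. -/
noncomputable def jacobiP (m : ℕ) (α β : ℤ) (x : ℝ) : ℝ :=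
  ∑ s ∈ Finset.range (m + 1),
    (((m + α).toNat.choose (m - s) : ℝ)) * (((m + β).toNat.choose s : ℝ)) *
      ((x - 1) / 2) ^ s * ((x + 1) / 2) ^ (m - s)

/-- The generalized binomial probability
`p_j(2B, μ, m) = (m!(2B+m)!)/(j!(2B+2m−j)!) μ^{j−m} (1−μ)^{2B+m−j} (P_m^{(j−m,2B+m−j)}(1−2μ))²`,
where the powers of `μ` and `1−μ` are integer (possibly negative) powers. -/
noncomputable def genBinomP (B m : ℕ) (μ : ℝ) (j : ℕ) : ℝ :=
  ((m.factorial * (2 * B + m).factorial : ℕ) : ℝ)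
      / ((j.factorial * (2 * B + 2 * m - j).factorial : ℕ) : ℝ)
    * μ ^ ((j : ℤ) - (m : ℤ)) * (1 - μ) ^ ((2 * B + m : ℤ) - (j : ℤ))
    * (jacobiP m ((j : ℤ) - (m : ℤ)) ((2 * B + m : ℤ) - (j : ℤ)) (1 - 2 * μ)) ^ 2

/-!
Up to a constant, `genBinomP B m μ j` is the binomial weight of `j` times the square of the degree
`m` Krawtchouk polynomial `K_m(j)`, both for `N = 2B + 2m` trials of parameter `μ`. The binomial
theorem applied to the product of two generating functions in independent variables gives
orthogonality, `∑ j, w_j K_m(j) G_j(X) = C(N, m) (μ(1 - μ))^m X^m`, where `G_j` generates the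
`K_m(j)`. Multiplying `G_j` by `j` amounts to applying a first-order differential operator in `X`
that does not depend on `j`, so it can be applied to the right-hand side; the coefficient of `X^m`
then gives the mean `Nμ + m(1 - 2μ) = m + 2Bμ`.
-/

section Krawtchouk

open Polynomial

theorem coeff_one_add_C_mul_X_pow {R : Type*} [CommSemiring R] (a : R) (n k : ℕ) :
    ((1 + C a * X : R[X]) ^ n).coeff k = a ^ k * n.choose k := by
  have hcomp : (1 + C a * X : R[X]) ^ n = ((1 + X) ^ n : R[X]).comp (C a * X) := by simp
  rw [hcomp, comp_C_mul_X_coeff, coeff_one_add_X_pow, mul_comm]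

theorem mul_derivative_pow {R : Type*} [CommSemiring R] (f : R[X]) (n : ℕ) :
    f * derivative (f ^ n) = n * derivative f * f ^ n := by
  cases n with
  | zero => simp
  | succ n => rw [derivative_pow_succ, ← C_eq_natCast]; push_cast; ring

theorem coeff_mul_derivative_C_mul_X_pow {R : Type*} [Semiring R] (f : R[X]) (a : R) (m : ℕ) :
    (f * derivative (C a * X ^ m)).coeff m = f.coeff 1 * (a * m) := by
  cases m with
  | zero => simp
  | succ m =>
    rw [derivative_C_mul_X_pow, Nat.add_sub_cancel, ← mul_assoc, coeff_mul_X_pow',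
      if_pos m.le_succ, Nat.add_sub_cancel_left, coeff_mul_C]

variable {R : Type*} [CommRing R]

/-- The probability of `j` successes in `N` Bernoulli trials of parameter `p`, as an element of an
arbitrary commutative ring. -/
def binomialWeight (p : R) (N j : ℕ) : R :=
  N.choose j * p ^ j * (1 - p) ^ (N - j)

/-- The generating polynomial `(1 + (1 - p)X)^j (1 - pX)^k` of the Krawtchouk polynomials: with
`N = j + k`, the coefficient of `X ^ m` is the Krawtchouk polynomial of degree `m` for `N` trials of
parameter `p`, evaluated at `j`, in the normalization without factorials. -/
noncomputable def krawtchoukGen (p : R) (j k : ℕ) : R[X] :=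
  (1 + C (1 - p) * X) ^ j * (1 + C (-p) * X) ^ k

theorem sum_binomialWeight_mul_krawtchoukGen_mul_map (p : R) (N : ℕ) :
    ∑ j ∈ range (N + 1), C (C (binomialWeight p N j) * krawtchoukGen p j (N - j)) *
        (krawtchoukGen p j (N - j)).map C
      = (1 + C (C (p * (1 - p)) * X) * X) ^ N := by
  have hsplit : (1 + C (C (p * (1 - p)) * X) * X : R[X][X])
      = C (C p) * (C (1 + C (1 - p) * X) * (1 + C (C (1 - p)) * X))
        + C (C (1 - p)) * (C (1 + C (-p) * X) * (1 + C (C (-p)) * X)) := by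
    simp only [map_add, map_mul, map_sub, map_neg, map_one]
    ring
  rw [hsplit, add_pow]
  refine sum_congr rfl fun j _ ↦ ?_
  simp only [binomialWeight, krawtchoukGen, Polynomial.map_mul, Polynomial.map_pow,
    Polynomial.map_add, Polynomial.map_one, map_X, map_C, map_mul, map_pow, map_natCast, mul_pow]
  ring

/-- Orthogonality of the Krawtchouk polynomials for the binomial distribution: the coefficient of
`X ^ n` is the inner product of those of degrees `m` and `n`. -/
theorem sum_binomialWeight_mul_coeff_mul_krawtchoukGen (p : R) (N m : ℕ) :
    ∑ j ∈ range (N + 1), C (binomialWeight p N j * (krawtchoukGen p j (N - j)).coeff m) *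
        krawtchoukGen p j (N - j)
      = C (N.choose m * (p * (1 - p)) ^ m) * X ^ m := by
  have hcoeff := congrArg (coeff · m) (sum_binomialWeight_mul_krawtchoukGen_mul_map p N)
  simp only [finsetSum_coeff, coeff_C_mul, coeff_map, coeff_one_add_C_mul_X_pow] at hcoeff
  calc _ = ∑ j ∈ range (N + 1), C (binomialWeight p N j) * krawtchoukGen p j (N - j) *
        C ((krawtchoukGen p j (N - j)).coeff m) :=
        sum_congr rfl fun j _ ↦ by rw [C_mul]; ring
    _ = (C (p * (1 - p)) * X) ^ m * (N.choose m : R[X]) := hcoeff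
    _ = _ := by
        rw [mul_pow, ← C_pow, ← C_eq_natCast, mul_right_comm, ← C_mul, mul_comm (N.choose m : R)]

theorem natCast_mul_krawtchoukGen (p : R) (j k : ℕ) :
    (j : R[X]) * krawtchoukGen p j k
      = (1 + C (1 - p) * X) * (1 + C (-p) * X) * derivative (krawtchoukGen p j k)
        + C ((j + k) * p) * (1 + C (1 - p) * X) * krawtchoukGen p j k := by
  have hleft := mul_derivative_pow (1 + C (1 - p) * X) j
  have hright := mul_derivative_pow (1 + C (-p) * X) k
  simp only [derivative_add, derivative_one, derivative_C_mul_X, zero_add] at hleft hright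
  rw [krawtchoukGen, derivative_mul]
  simp only [map_add, map_mul, map_sub, map_neg, map_one, map_natCast] at hleft hright ⊢
  linear_combination (-(1 - C p * X) * (1 - C p * X) ^ k) * hleft
    - ((1 + (1 - C p) * X) * (1 + (1 - C p) * X) ^ j) * hright

theorem sum_binomialWeight_mul_coeff_mul_natCast_mul_krawtchoukGen (p : R) (N m : ℕ) :
    ∑ j ∈ range (N + 1), C (binomialWeight p N j * (krawtchoukGen p j (N - j)).coeff m) *
        (j * krawtchoukGen p j (N - j))
      = (1 + C (1 - p) * X) * (1 + C (-p) * X) *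
          derivative (C (N.choose m * (p * (1 - p)) ^ m) * X ^ m)
        + C (N * p) * (1 + C (1 - p) * X) * (C (N.choose m * (p * (1 - p)) ^ m) * X ^ m) := by
  rw [← sum_binomialWeight_mul_coeff_mul_krawtchoukGen, derivative_sum, mul_sum, mul_sum,
    ← sum_add_distrib]
  refine sum_congr rfl fun j hj ↦ ?_
  have hjN : (j + (N - j : ℕ) : R) = N := by
    rw [← Nat.cast_add, Nat.add_sub_cancel' (mem_range_succ_iff.1 hj)]
  rw [natCast_mul_krawtchoukGen, hjN, derivative_C_mul]
  ring

theorem sum_natCast_mul_binomialWeight_mul_coeff_sq (p : R) (N m : ℕ) :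
    ∑ j ∈ range (N + 1), j * (binomialWeight p N j * (krawtchoukGen p j (N - j)).coeff m ^ 2)
      = (N * p + m * (1 - 2 * p)) * (N.choose m * (p * (1 - p)) ^ m) := by
  set K : ℕ → R := fun j ↦ (krawtchoukGen p j (N - j)).coeff m
  set normSq : R := N.choose m * (p * (1 - p)) ^ m
  have hone : ((1 + C (1 - p) * X) * (1 + C (-p) * X)).coeff 1 = 1 - 2 * p := by
    rw [mul_coeff_one]
    simp only [coeff_add, coeff_one, coeff_C_mul, coeff_X_zero, coeff_X_one, one_ne_zero,
      ↓reduceIte]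
    ring
  have hshift : (C (N * p) * (1 + C (1 - p) * X) * (C normSq * X ^ m)).coeff m
      = N * p * normSq := by
    rw [← mul_assoc, coeff_mul_X_pow', if_pos le_rfl, Nat.sub_self]
    simp
  have hcoeff := congrArg (coeff · m)
    (sum_binomialWeight_mul_coeff_mul_natCast_mul_krawtchoukGen p N m)
  simp only [finsetSum_coeff, coeff_C_mul, coeff_natCast_mul, coeff_add,
    coeff_mul_derivative_C_mul_X_pow] at hcoeff
  calc ∑ j ∈ range (N + 1), j * (binomialWeight p N j * K j ^ 2)
      = ∑ j ∈ range (N + 1), binomialWeight p N j * K j * (j * K j) :=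
        sum_congr rfl fun j _ ↦ by ring
    _ = (1 - 2 * p) * (normSq * m) + N * p * normSq := by rw [hcoeff, hone, hshift]
    _ = (N * p + m * (1 - 2 * p)) * normSq := by ring

end Krawtchouk

theorem jacobiP_eq_coeff_krawtchoukGen (m j k : ℕ) (μ : ℝ) :
    jacobiP m (j - m) (k - m) (1 - 2 * μ) = (krawtchoukGen μ j k).coeff m := by
  have hneg : (1 - 2 * μ - 1) / 2 = -μ := by ring
  have hpos : (1 - 2 * μ + 1) / 2 = 1 - μ := by ring
  rw [krawtchoukGen, mul_comm (_ ^ j), Polynomial.coeff_mul,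
    Nat.sum_antidiagonal_eq_sum_range_succ_mk, jacobiP]
  simp only [add_sub_cancel, Int.toNat_natCast, coeff_one_add_C_mul_X_pow, hneg, hpos]
  exact sum_congr rfl fun s _ ↦ by ring

theorem genBinomP_eq_binomialWeight_mul_coeff_sq_div (B m j : ℕ) (μ : ℝ) (hμ0 : μ ≠ 0)
    (hμ1 : μ ≠ 1) (hj : j ≤ 2 * B + 2 * m) :
    genBinomP B m μ j
      = binomialWeight μ (2 * B + 2 * m) j *
          (krawtchoukGen μ j (2 * B + 2 * m - j)).coeff m ^ 2 /
        ((2 * B + 2 * m).choose m * (μ * (1 - μ)) ^ m) := by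
  have hq : 1 - μ ≠ 0 := sub_ne_zero.2 hμ1.symm
  have hk : (2 * B + m : ℤ) - j = (2 * B + 2 * m - j : ℕ) - m := by omega
  have hm : 2 * B + 2 * m - m = 2 * B + m := by omega
  rw [genBinomP, hk, jacobiP_eq_coeff_krawtchoukGen, binomialWeight, Nat.cast_choose ℝ hj,
    Nat.cast_choose ℝ (by omega : m ≤ 2 * B + 2 * m), hm, zpow_sub₀ hμ0, zpow_sub₀ hq]
  simp only [zpow_natCast, Nat.cast_mul]
  field_simp
  rw [mul_pow]
  ring

theorem genBinomP_mean_general (B m : ℕ) (μ : ℝ) (hμ0 : μ ≠ 0) (hμ1 : μ ≠ 1) :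
    ∑ j ∈ range (2 * B + 2 * m + 1), (j : ℝ) * genBinomP B m μ j = m + 2 * B * μ := by
  set N := 2 * B + 2 * m with hN
  set normSq : ℝ := N.choose m * (μ * (1 - μ)) ^ m
  have normSq_ne_zero : normSq ≠ 0 :=
    mul_ne_zero (Nat.cast_ne_zero.2 (Nat.choose_ne_zero (by omega)))
      (pow_ne_zero m (mul_ne_zero hμ0 (sub_ne_zero.2 hμ1.symm)))
  calc ∑ j ∈ range (N + 1), (j : ℝ) * genBinomP B m μ j
      = (∑ j ∈ range (N + 1),
          j * (binomialWeight μ N j * (krawtchoukGen μ j (N - j)).coeff m ^ 2)) / normSq := by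
        rw [sum_div]
        refine sum_congr rfl fun j hj ↦ ?_
        rw [genBinomP_eq_binomialWeight_mul_coeff_sq_div B m j μ hμ0 hμ1
          (mem_range_succ_iff.1 hj), mul_div_assoc']
    _ = N * μ + m * (1 - 2 * μ) := by
        rw [sum_natCast_mul_binomialWeight_mul_coeff_sq, mul_div_cancel_right₀ _ normSq_ne_zero]
    _ = m + 2 * B * μ := by
        rw [hN]
        push_cast
        ring

/-- The mean of the generalized binomial distribution: `E(X) = m + 2Bμ`. -/
theorem genBinomP_mean (B m : ℕ) (μ : ℝ) (h0 : 0 < μ) (h1 : μ < 1) :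
    ∑ j ∈ Finset.range (2 * B + 2 * m + 1), (j : ℝ) * genBinomP B m μ j
      = (m : ℝ) + 2 * B * μ := by
  exact genBinomP_mean_general B m μ h0.ne' h1.ne
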